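/- arXiv:1907.02135 — 2 statements merged into one kernel-verified Lean document; each statement's English description precedes it below -/
import Mathlib

section
/- The image of Ω_A under ♮ equals (1⊗Λ + a(a+1)⊗1 − b(b+1)⊗1 − c(c+1)⊗1)·(a(a+1)⊗Λ − b(b+1)c(c+1)⊗1) − (1⊗Λ + a(a+1)⊗1)·(b(b+1)⊗1 + c(c+1)⊗1); the image of Ω_B under ♮ equals (1⊗Λ + b(b+1)⊗1 − c(c+1)⊗1 − a(a+1)⊗1)·(b(b+1)⊗Λ − c(c+1)a(a+1)⊗1) − (1⊗Λ + b(b+1)⊗1)·(c(c+1)⊗1 + a(a+1)⊗1); and the image of Ω_C under ♮ equals (1⊗Λ + c(c+1)⊗1 − a(a+1)⊗1 − b(b+1)⊗1)·(c(c+1)⊗Λ − a(a+1)b(b+1)⊗1) − (1⊗Λ + c(c+1)⊗1)·(a(a+1)⊗1 + b(b+1)⊗1). -/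
open scoped TensorProduct

noncomputable section

namespace RacahPaper

variable (F : Type) [Field F]

/-- Defining relations of `U(sl₂)`: generators `e = ι 0`, `f = ι 1`, `h = ι 2` with
`he - eh = 2e`, `hf - fh = -2f`, `ef - fe = h`. -/
inductive slRel : FreeAlgebra F (Fin 3) → FreeAlgebra F (Fin 3) → Prop
  | he : slRel (FreeAlgebra.ι F 2 * FreeAlgebra.ι F 0 - FreeAlgebra.ι F 0 * FreeAlgebra.ι F 2)
      (2 * FreeAlgebra.ι F 0)
  | hf : slRel (FreeAlgebra.ι F 2 * FreeAlgebra.ι F 1 - FreeAlgebra.ι F 1 * FreeAlgebra.ι F 2)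
      (-(2 * FreeAlgebra.ι F 1))
  | ef : slRel (FreeAlgebra.ι F 0 * FreeAlgebra.ι F 1 - FreeAlgebra.ι F 1 * FreeAlgebra.ι F 0)
      (FreeAlgebra.ι F 2)

/-- The universal enveloping algebra `U(sl₂)`. -/
abbrev U := RingQuot (slRel F)

/-- The generator `e` of `U(sl₂)`. -/
def e : U F := RingQuot.mkAlgHom F (slRel F) (FreeAlgebra.ι F 0)

/-- The generator `f` of `U(sl₂)`. -/
def f : U F := RingQuot.mkAlgHom F (slRel F) (FreeAlgebra.ι F 1)

/-- The generator `h` of `U(sl₂)`. -/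
def h : U F := RingQuot.mkAlgHom F (slRel F) (FreeAlgebra.ι F 2)

/-- The equitable generator `x = -f - h/2`. -/
def ux : U F := -f F - (2 : F)⁻¹ • h F

/-- The equitable generator `y = h/2`. -/
def uy : U F := (2 : F)⁻¹ • h F

/-- The equitable generator `z = e - h/2`. -/
def uz : U F := e F - (2 : F)⁻¹ • h F

/-- The normalized Casimir element `Λ = ef + h(h-2)/4` of `U(sl₂)`. -/
def Lam : U F := e F * f F + (4 : F)⁻¹ • (h F * (h F - 2))

/-- `ν_x = f/2`. -/
def nux : U F := (2 : F)⁻¹ • f F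

/-- `ν_z = e/2`. -/
def nuz : U F := (2 : F)⁻¹ • e F

/-- `U_n`: the span of the `e^i h^j f^k` with `k - i = n`. -/
def Usub (n : ℤ) : Submodule F (U F) :=
  Submodule.span F {u : U F | ∃ i j k : ℕ, (k : ℤ) - (i : ℤ) = n ∧ u = e F ^ i * h F ^ j * f F ^ k}

-- Racah algebra
/-- Generator `A` of the free algebra. -/
def fA : FreeAlgebra F (Fin 4) := FreeAlgebra.ι F 0
/-- Generator `B` of the free algebra. -/
def fB : FreeAlgebra F (Fin 4) := FreeAlgebra.ι F 1
/-- Generator `C` of the free algebra. -/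
def fC : FreeAlgebra F (Fin 4) := FreeAlgebra.ι F 2
/-- Generator `D` of the free algebra. -/
def fD : FreeAlgebra F (Fin 4) := FreeAlgebra.ι F 3

/-- `α = [A,D] + AC - BA` in the free algebra. -/
def falpha : FreeAlgebra F (Fin 4) := (fA F * fD F - fD F * fA F) + fA F * fC F - fB F * fA F
/-- `β = [B,D] + BA - CB` in the free algebra. -/
def fbeta : FreeAlgebra F (Fin 4) := (fB F * fD F - fD F * fB F) + fB F * fA F - fC F * fB F
/-- `γ = [C,D] + CB - AC` in the free algebra. -/
def fgamma : FreeAlgebra F (Fin 4) := (fC F * fD F - fD F * fC F) + fC F * fB F - fA F * fC F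

/-- Defining relations of the Racah algebra: `[A,B] = [B,C] = [C,A] = 2D` and each of
`α, β, γ` commutes with each of the generators `A, B, C, D`. -/
inductive racahRel : FreeAlgebra F (Fin 4) → FreeAlgebra F (Fin 4) → Prop
  | AB : racahRel (fA F * fB F - fB F * fA F) (2 * fD F)
  | BC : racahRel (fB F * fC F - fC F * fB F) (2 * fD F)
  | CA : racahRel (fC F * fA F - fA F * fC F) (2 * fD F)
  | calpha (i : Fin 4) : racahRel (falpha F * FreeAlgebra.ι F i) (FreeAlgebra.ι F i * falpha F)
  | cbeta (i : Fin 4) : racahRel (fbeta F * FreeAlgebra.ι F i) (FreeAlgebra.ι F i * fbeta F)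
  | cgamma (i : Fin 4) : racahRel (fgamma F * FreeAlgebra.ι F i) (FreeAlgebra.ι F i * fgamma F)

/-- The Racah algebra `ℜ`. -/
abbrev Racah := RingQuot (racahRel F)

/-- Generator `A` of the Racah algebra. -/
def A : Racah F := RingQuot.mkAlgHom F (racahRel F) (fA F)
/-- Generator `B` of the Racah algebra. -/
def B : Racah F := RingQuot.mkAlgHom F (racahRel F) (fB F)
/-- Generator `C` of the Racah algebra. -/
def C : Racah F := RingQuot.mkAlgHom F (racahRel F) (fC F)
/-- Generator `D` of the Racah algebra. -/
def D : Racah F := RingQuot.mkAlgHom F (racahRel F) (fD F)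

/-- `α = [A,D] + AC - BA` in the Racah algebra. -/
def alpha : Racah F := (A F * D F - D F * A F) + A F * C F - B F * A F
/-- `β = [B,D] + BA - CB` in the Racah algebra. -/
def beta : Racah F := (B F * D F - D F * B F) + B F * A F - C F * B F
/-- `γ = [C,D] + CB - AC` in the Racah algebra. -/
def gamma : Racah F := (C F * D F - D F * C F) + C F * B F - A F * C F
/-- `δ = A + B + C` in the Racah algebra. -/
def delta : Racah F := A F + B F + C F

/-- `Ω_A = D² + (BAC + CAB)/2 + A² + Bγ - Cβ - Aδ`. -/
def OmegaA : Racah F :=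
  D F ^ 2 + (2 : F)⁻¹ • (B F * A F * C F + C F * A F * B F) + A F ^ 2
    + B F * gamma F - C F * beta F - A F * delta F

/-- `Ω_B = D² + (CBA + ABC)/2 + B² + Cα - Aγ - Bδ`. -/
def OmegaB : Racah F :=
  D F ^ 2 + (2 : F)⁻¹ • (C F * B F * A F + A F * B F * C F) + B F ^ 2
    + C F * alpha F - A F * gamma F - B F * delta F

/-- `Ω_C = D² + (ACB + BCA)/2 + C² + Aβ - Bα - Cδ`. -/
def OmegaC : Racah F :=
  D F ^ 2 + (2 : F)⁻¹ • (A F * C F * B F + B F * C F * A F) + C F ^ 2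
    + A F * beta F - B F * alpha F - C F * delta F

-- the tensor algebra F[a,b,c] ⊗ U(sl2)
/-- The polynomial algebra `F[a,b,c]`. -/
abbrev P := MvPolynomial (Fin 3) F

/-- The tensor product algebra `F[a,b,c] ⊗ U(sl₂)`. -/
abbrev T := P F ⊗[F] U F

/-- The indeterminate `a`. -/
def pa : P F := MvPolynomial.X 0
/-- The indeterminate `b`. -/
def pb : P F := MvPolynomial.X 1
/-- The indeterminate `c`. -/
def pc : P F := MvPolynomial.X 2

/-- `A♮`. -/
def Anat : T F :=
  (pa F * (pa F + 1)) ⊗ₜ[F] (1 : U F) + (pb F - pc F - pa F) ⊗ₜ[F] ux F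
    + (pa F + pb F - pc F + 1) ⊗ₜ[F] uy F - (1 : P F) ⊗ₜ[F] (ux F * uy F)

/-- `B♮`. -/
def Bnat : T F :=
  (pb F * (pb F + 1)) ⊗ₜ[F] (1 : U F) + (pc F - pa F - pb F) ⊗ₜ[F] uy F
    + (pb F + pc F - pa F + 1) ⊗ₜ[F] uz F - (1 : P F) ⊗ₜ[F] (uy F * uz F)

/-- `C♮`. -/
def Cnat : T F :=
  (pc F * (pc F + 1)) ⊗ₜ[F] (1 : U F) + (pa F - pb F - pc F) ⊗ₜ[F] uz F
    + (pc F + pa F - pb F + 1) ⊗ₜ[F] ux F - (1 : P F) ⊗ₜ[F] (uz F * ux F)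

/-- `D♮`. -/
def Dnat : T F :=
  (1 : P F) ⊗ₜ[F] (uz F * uy F * ux F + uz F * ux F)
    + (pc F + pb F * (pc F + pa F - pb F)) ⊗ₜ[F] ux F
    + (pa F + pc F * (pa F + pb F - pc F)) ⊗ₜ[F] uy F
    + (pb F + pa F * (pb F + pc F - pa F)) ⊗ₜ[F] uz F
    + (pb F - pc F) ⊗ₜ[F] (ux F * uy F)
    + (pc F - pa F) ⊗ₜ[F] (uy F * uz F)
    + (pa F - pb F) ⊗ₜ[F] (uz F * ux F)

/-- `R = 2 ⊗ yν_x + 2(c+a-b+1) ⊗ ν_x`. -/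
def Rel : T F :=
  (2 : P F) ⊗ₜ[F] (uy F * nux F) + (2 * (pc F + pa F - pb F + 1)) ⊗ₜ[F] nux F

/-- `L = -2 ⊗ yν_z - 2(a-b-c-1) ⊗ ν_z`. -/
def Lel : T F :=
  -((2 : P F) ⊗ₜ[F] (uy F * nuz F)) - (2 * (pa F - pb F - pc F - 1)) ⊗ₜ[F] nuz F

/-- `θ = 1⊗y - b⊗1`. -/
def theta : T F := (1 : P F) ⊗ₜ[F] uy F - pb F ⊗ₜ[F] (1 : U F)

/-- `ϑ = 1⊗y + a⊗1`. -/
def vartheta : T F := (1 : P F) ⊗ₜ[F] uy F + pa F ⊗ₜ[F] (1 : U F)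

/-- `F[a,b,c] ⊗ U_n` as a subspace of `F[a,b,c] ⊗ U(sl₂)`. -/
def TU (n : ℤ) : Submodule F (T F) :=
  Submodule.span F {t : T F | ∃ (p : P F) (u : U F), u ∈ Usub F n ∧ t = p ⊗ₜ[F] u}

section Core

variable {S R : Type} [CommRing S] [Ring R]

/-- Graded normal form. -/
def NF (ι : S →+* R) (e f : R) (l p q r m : S) : R :=
  ι l * (f * f) + ι p * f + ι q + ι r * e + ι m * (e * e)

theorem NF_add (ι : S →+* R) (e f : R) (l p q r m l' p' q' r' m' : S) :
    NF ι e f l p q r m + NF ι e f l' p' q' r' m'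
      = NF ι e f (l + l') (p + p') (q + q') (r + r') (m + m') := by
  simp only [NF, map_add, add_mul]; abel

theorem NF_sub (ι : S →+* R) (e f : R) (l p q r m l' p' q' r' m' : S) :
    NF ι e f l p q r m - NF ι e f l' p' q' r' m'
      = NF ι e f (l - l') (p - p') (q - q') (r - r') (m - m') := by
  simp only [NF, map_sub, sub_mul]; abel

theorem NF_smul (ι : S →+* R) (e f : R) (k l p q r m : S) :
    ι k * NF ι e f l p q r m = NF ι e f (k * l) (k * p) (k * q) (k * r) (k * m) := by
  simp only [NF, map_mul, mul_add, mul_assoc]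

theorem NF_mul (ι : S →+* R) (s t : S →+* S) (e f : R) (u v : S)
    (he : ∀ p, e * ι p = ι (s p) * e) (hf : ∀ p, f * ι p = ι (t p) * f)
    (hef : e * f = ι u) (hfe : f * e = ι v) (p q r p' q' r' : S) :
    NF ι e f 0 p q r 0 * NF ι e f 0 p' q' r' 0
      = NF ι e f (p * t p') (p * t q' + q * p') (p * t r' * v + q * q' + r * s p' * u)
          (q * r' + r * s q') (r * s r') := by
  have h1 : ∀ w p, e * (ι p * w) = ι (s p) * (e * w) := fun w p => by
    rw [← mul_assoc, he, mul_assoc]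
  have h2 : ∀ w p, f * (ι p * w) = ι (t p) * (f * w) := fun w p => by
    rw [← mul_assoc, hf, mul_assoc]
  simp only [NF, map_zero, zero_mul, zero_add, add_zero, mul_add, add_mul, mul_assoc, h1, h2,
    he, hf, hef, hfe, map_add, map_mul]
  abel

theorem core (ι : S →+* R) (s t : S →+* S) (e f : R) (a b c L y : S)
    (he : ∀ p, e * ι p = ι (s p) * e) (hf : ∀ p, f * ι p = ι (t p) * f)
    (hef : e * f = ι (L - y * y + y)) (hfe : f * e = ι (L - y * y - y))
    (sa : s a = a) (sb : s b = b) (sc : s c = c) (sL : s L = L) (sy : s y = y - 1)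
    (ta : t a = a) (tb : t b = b) (tc : t c = c) (tL : t L = L) (ty : t y = y + 1)
    (x z A B C D al be ga : R)
    (hx : x = - f - ι y) (hz : z = e - ι y)
    (hA : A = ι (a * (a + 1)) + ι (b - c - a) * x + ι (a + b - c + 1) * ι y - x * ι y)
    (hB : B = ι (b * (b + 1)) + ι (c - a - b) * ι y + ι (b + c - a + 1) * z - ι y * z)
    (hC : C = ι (c * (c + 1)) + ι (a - b - c) * z + ι (c + a - b + 1) * x - z * x)
    (hD : D = (z * ι y * x + z * x) + ι (c + b * (c + a - b)) * x
      + ι (a + c * (a + b - c)) * ι y + ι (b + a * (b + c - a)) * z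
      + ι (b - c) * (x * ι y) + ι (c - a) * (ι y * z) + ι (a - b) * (z * x))
    (hal : al = (A * D - D * A) + A * C - B * A)
    (hbe : be = (B * D - D * B) + B * A - C * B)
    (hga : ga = (C * D - D * C) + C * B - A * C) :
    (ι 2 * (D * D) + (B * A * C + C * (A * B)) + ι 2 * (A * A) + ι 2 * (B * ga)
      - ι 2 * (C * be) - ι 2 * (A * (A + B + C))
      = ι 2 * ι ((L + a * (a + 1) - b * (b + 1) - c * (c + 1)) *
        (a * (a + 1) * L - b * (b + 1) * (c * (c + 1)))
        - (L + a * (a + 1)) * (b * (b + 1) + c * (c + 1)))) ∧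
    (ι 2 * (D * D) + (C * (B * A) + A * B * C) + ι 2 * (B * B) + ι 2 * (C * al)
      - ι 2 * (A * ga) - ι 2 * (B * (A + B + C))
      = ι 2 * ι ((L + b * (b + 1) - c * (c + 1) - a * (a + 1)) *
        (b * (b + 1) * L - c * (c + 1) * (a * (a + 1)))
        - (L + b * (b + 1)) * (c * (c + 1) + a * (a + 1)))) ∧
    (ι 2 * (D * D) + (A * B * C - ι 2 * (A * D) + (B * A * C + ι 2 * (B * D)))
      + ι 2 * (C * C) + ι 2 * (A * be)
      - ι 2 * (B * al) - ι 2 * (C * (A + B + C))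
      = ι 2 * ι ((L + c * (c + 1) - a * (a + 1) - b * (b + 1)) *
        (c * (c + 1) * L - a * (a + 1) * (b * (b + 1)))
        - (L + c * (c + 1)) * (a * (a + 1) + b * (b + 1)))) := by
  have hm := NF_mul ι s t e f _ _ he hf hef hfe
  have hI : ∀ q, ι q = NF ι e f 0 0 q 0 0 := fun q => by simp [NF]
  have hx' : x = NF ι e f 0 (-1) (-y) 0 0 := by
    rw [hx]; simp [NF]; abel
  have hz' : z = NF ι e f 0 0 (-y) 1 0 := by
    rw [hz]; simp [NF]; abel
  have hxy : x * ι y = NF ι e f 0 (-(y + 1)) (-(y * y)) 0 0 := by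
    rw [hx', hI y, hm]
    simp only [map_neg, map_one, map_zero, sy, ty]
    congr 1 <;> ring
  have hyz : ι y * z = NF ι e f 0 0 (-(y * y)) y 0 := by
    rw [hz', hI y, hm]
    simp only [map_neg, map_one, map_zero, sy, ty]
    congr 1 <;> ring
  have hzx : z * x = NF ι e f 0 y (2 * y * y - y - L) (1 - y) 0 := by
    rw [hz', hx', hm]
    simp only [map_neg, map_one, map_zero, sy, ty]
    congr 1 <;> ring
  have hyx : ι y * x = NF ι e f 0 (-y) (-(y * y)) 0 0 := by
    rw [hx', hI y, hm]
    simp only [map_neg, map_one, map_zero, sy, ty]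
    congr 1 <;> ring
  have hzyx : z * ι y * x = NF ι e f 0 (y * y) (y * y * y - (y - 1) * (L - y * y + y))
      (-((y - 1) * (y - 1))) 0 := by
    rw [mul_assoc, hyx, hz', hm]
    simp only [map_neg, map_mul, map_one, map_zero, sy, ty]
    congr 1 <;> ring
  have hA' : A = NF ι e f 0 (a + c - b - y - 1 + 2 * (y + 1))
      (a * (a + 1) + (2 * a + 1) * y + y * y) 0 0 := by
    rw [hA, hxy, hx', NF_smul, ← map_mul, hI, hI (_ * y)]
    simp only [NF_add, NF_sub]
    congr 1 <;> ring
  have hB' : B = NF ι e f 0 0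
      (b * (b + 1) - (2 * b + 1) * y + y * y) (b + c - a + 1 - y) 0 := by
    rw [hB, hyz, hz', NF_smul, ← map_mul, hI, hI (_ * y)]
    simp only [NF_add, NF_sub]
    congr 1 <;> ring
  have hC' : C = NF ι e f 0 (-(c + a - b + 1) - y)
      (c * (c + 1) - (2 * a - 2 * b) * y + L - 2 * y * y ) (a - b - c - 1 + y) 0 := by
    rw [hC, hzx, hz', hx', NF_smul, NF_smul, hI]
    simp only [NF_add, NF_sub]
    congr 1 <;> ring
  have hD' : D = NF ι e f 0
      (y * y + y - (c + b * (c + a - b)) - (b - c) * (y + 1) + (a - b) * y)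
      (y * y * y - (y - 1) * (L - y * y + y) + (2 * y * y - y - L) - (c + b * (c + a - b)) * y
        + (a + c * (a + b - c)) * y - (b + a * (b + c - a)) * y - (b - c) * (y * y)
        - (c - a) * (y * y) + (a - b) * (2 * y * y - y - L))
      (-((y - 1) * (y - 1)) + (1 - y) + (b + a * (b + c - a)) + (c - a) * y
        + (a - b) * (1 - y)) 0 := by
    rw [hD, hzyx, hzx, hxy, hyz, hz', hx', ← map_mul, hI (_ * y)]
    simp only [NF_add, NF_sub, NF_smul]
    congr 1 <;> ring
  clear hx hz hA hB hC hD hx' hz' hxy hyz hzx hyx hzyx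
  have hal' : al = NF ι e f 0 0 ((c * (c + 1) - b * (b + 1)) * (a * (a + 1) - L)) 0 0 := by
    rw [hal, hA', hB', hC', hD']
    simp only [hm, NF_add, NF_sub, map_add, map_sub, map_neg, map_mul, map_one, map_zero,
      map_ofNat, sa, sb, sc, sL, sy, ta, tb, tc, tL, ty]
    congr 1 <;> ring
  have hbe' : be = NF ι e f 0 0 ((a * (a + 1) - c * (c + 1)) * (b * (b + 1) - L)) 0 0 := by
    rw [hbe, hA', hB', hC', hD']
    simp only [hm, NF_add, NF_sub, map_add, map_sub, map_neg, map_mul, map_one, map_zero,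
      map_ofNat, sa, sb, sc, sL, sy, ta, tb, tc, tL, ty]
    congr 1 <;> ring
  have hga' : ga = NF ι e f 0 0 ((b * (b + 1) - a * (a + 1)) * (c * (c + 1) - L)) 0 0 := by
    rw [hga, hA', hB', hC', hD']
    simp only [hm, NF_add, NF_sub, map_add, map_sub, map_neg, map_mul, map_one, map_zero,
      map_ofNat, sa, sb, sc, sL, sy, ta, tb, tc, tL, ty]
    congr 1 <;> ring
  clear hal hbe hga
  have hBA : B * A = NF ι e f 0 ((b * (b + 1) - (2 * b + 1) * y + y * y) * (a + c - b + y + 1)) 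
      ((b * (b + 1) - (2 * b + 1) * y + y * y) * (a * (a + 1) + (2 * a + 1) * y + y * y) + (b + c - a + 1 - y) * (a + c - b + (y - 1) + 1) * (L - y * y + y)) 
      ((b + c - a + 1 - y) * (a * (a + 1) + (2 * a + 1) * (y - 1) + (y - 1) * (y - 1))) 0 := by
    rw [hA', hB', hm]
    simp only [map_add, map_sub, map_neg, map_mul, map_one, map_zero,
      map_ofNat, sa, sb, sc, sL, sy, ta, tb, tc, tL, ty]
    congr 1 <;> ring
  have hAB : A * B = NF ι e f 0 ((a + c - b + y + 1) * (b * (b + 1) - (2 * b + 1) * (y + 1) + (y + 1) * (y + 1))) 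
      ((a + c - b + y + 1) * (b + c - a + 1 - (y + 1)) * (L - y * y - y) + (a * (a + 1) + (2 * a + 1) * y + y * y) * (b * (b + 1) - (2 * b + 1) * y + y * y)) 
      ((a * (a + 1) + (2 * a + 1) * y + y * y) * (b + c - a + 1 - y)) 0 := by
    rw [hA', hB', hm]
    simp only [map_add, map_sub, map_neg, map_mul, map_one, map_zero,
      map_ofNat, sa, sb, sc, sL, sy, ta, tb, tc, tL, ty]
    congr 1 <;> ring
  have key : ∀ q l p q' r m : S, l = 0 → p = 0 → q' = 2 * q → r = 0 → m = 0 →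
      NF ι e f l p q' r m = ι 2 * ι q := by
    rintro q l p q' r m rfl rfl rfl rfl rfl
    rw [← hI, map_mul]
  have hde : A + B + C = NF ι e f 0 0 (a * (a + 1) + b * (b + 1) + c * (c + 1) + L) 0 0 := by
    rw [hA', hB', hC']
    simp only [NF_add]
    congr 1 <;> ring
  rw [hde, hAB, hBA, hA', hB', hC', hD', hal', hbe', hga']
  simp only [hm]
  simp only [NF_smul, NF_add, NF_sub]
  refine ⟨?_, ?_, ?_⟩
  · apply key <;>
    simp only [map_add, map_sub, map_neg, map_mul, map_one, map_zero,
      map_ofNat, sa, sb, sc, sL, sy, ta, tb, tc, tL, ty] <;> ring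
  · apply key <;>
    simp only [map_add, map_sub, map_neg, map_mul, map_one, map_zero,
      map_ofNat, sa, sb, sc, sL, sy, ta, tb, tc, tL, ty] <;> ring
  · apply key <;>
    simp only [map_add, map_sub, map_neg, map_mul, map_one, map_zero,
      map_ofNat, sa, sb, sc, sL, sy, ta, tb, tc, tL, ty] <;> ring

end Core

section Inst

open Polynomial

theorem smul_half (K : Type) [Field K] {M : Type} [AddCommGroup M] [Module K M]
    (hchar : (2 : K) ≠ 0) {u v : M} (huv : u + u = v + v) : u = v := by
  have : (2 : K) • u = (2 : K) • v := by rw [two_smul, two_smul, huv]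
  simpa [hchar] using congrArg (fun w => (2 : K)⁻¹ • w) this

variable {Q R : Type} [CommRing Q] [Ring R]

/-- The scalars `Q[Λ]`. -/
def io1 (iL : Q →+* R) (L : R) (hL : ∀ p, Commute (iL p) L) : Q[X] →+* R :=
  eval₂RingHom' iL L hL

theorem io1_comm (iL : Q →+* R) (L : R) (hL : ∀ p, Commute (iL p) L)
    (w : R) (hw : Commute w L) (hw' : ∀ p, Commute (iL p) w) (p : Q[X]) :
    Commute w (io1 iL L hL p) := by
  induction p using Polynomial.induction_on' with
  | add p q hp hq => rw [map_add]; exact hp.add_right hq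
  | monomial n a =>
    simp only [io1, eval₂RingHom', RingHom.coe_mk, MonoidHom.coe_mk, OneHom.coe_mk,
      eval₂_monomial]
    exact Commute.mul_right (hw' a).symm (Commute.pow_right hw _)

theorem io_shift (j : Q[X] →+* R) (y w : R) (hy : ∀ p, Commute (j p) y)
    (hw : ∀ p, Commute w (j p)) (k : Q[X][X])
    (hk : w * y = eval₂RingHom' j y hy k * w) (p : Q[X][X]) :
    w * eval₂RingHom' j y hy p
      = eval₂RingHom' j y hy (eval₂RingHom Polynomial.C k p) * w := by
  have hC : ∀ a, eval₂RingHom' j y hy (Polynomial.C a) = j a := fun a => by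
    simp [eval₂RingHom']
  have hX : eval₂RingHom' j y hy X = y := by simp [eval₂RingHom']
  induction p using Polynomial.induction_on with
  | C a =>
    have : eval₂RingHom Polynomial.C k (Polynomial.C a) = Polynomial.C a := by simp
    rw [this, hC]; exact (hw a).eq
  | add p q hp hq => simp only [map_add, mul_add, add_mul, hp, hq]
  | monomial n a ih =>
    have : eval₂RingHom Polynomial.C k X = k := by simp
    rw [pow_succ, ← mul_assoc, map_mul, ← mul_assoc, ih, mul_assoc, hX, hk, ← mul_assoc,
      ← map_mul, map_mul (eval₂RingHom Polynomial.C k) _ X, this]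

theorem gen {K : Type} [Field K] [Algebra K R] (hchar : (2 : K) ≠ 0) (iL : Q →+* R)
    (e f y x z L : R) (he' : ∀ p, Commute (iL p) e) (hf' : ∀ p, Commute (iL p) f)
    (hy' : ∀ p, Commute (iL p) y)
    (hye : (y + y) * e - e * (y + y) = e + e) (hyf : (y + y) * f - f * (y + y) = -(f + f))
    (hef : e * f - f * e = y + y) (hLam : L = e * f + (y * y - y))
    (hx : x = - f - y) (hz : z = e - y) (a b c : Q) (A B C D al be ga oA oB oC : R)
    (hA : A = iL (a * (a + 1)) + iL (b - c - a) * x + iL (a + b - c + 1) * y - x * y)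
    (hB : B = iL (b * (b + 1)) + iL (c - a - b) * y + iL (b + c - a + 1) * z - y * z)
    (hC : C = iL (c * (c + 1)) + iL (a - b - c) * z + iL (c + a - b + 1) * x - z * x)
    (hD : D = (z * y * x + z * x) + iL (c + b * (c + a - b)) * x
      + iL (a + c * (a + b - c)) * y + iL (b + a * (b + c - a)) * z
      + iL (b - c) * (x * y) + iL (c - a) * (y * z) + iL (a - b) * (z * x))
    (rBC : B * C - C * B = D + D) (rCA : C * A - A * C = D + D)
    (hal : al = (A * D - D * A) + A * C - B * A)
    (hbe : be = (B * D - D * B) + B * A - C * B)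
    (hga : ga = (C * D - D * C) + C * B - A * C)
    (hoA : oA = D * D + (2 : K)⁻¹ • (B * A * C + C * A * B) + A * A + B * ga - C * be
      - A * (A + B + C))
    (hoB : oB = D * D + (2 : K)⁻¹ • (C * B * A + A * B * C) + B * B + C * al - A * ga
      - B * (A + B + C))
    (hoC : oC = D * D + (2 : K)⁻¹ • (A * C * B + B * C * A) + C * C + A * be - B * al
      - C * (A + B + C)) :
    (oA = (L + iL (a * (a + 1)) - iL (b * (b + 1)) - iL (c * (c + 1))) *
        (iL (a * (a + 1)) * L - iL (b * (b + 1) * (c * (c + 1))))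
        - (L + iL (a * (a + 1))) * (iL (b * (b + 1)) + iL (c * (c + 1)))) ∧
    (oB = (L + iL (b * (b + 1)) - iL (c * (c + 1)) - iL (a * (a + 1))) *
        (iL (b * (b + 1)) * L - iL (c * (c + 1) * (a * (a + 1))))
        - (L + iL (b * (b + 1))) * (iL (c * (c + 1)) + iL (a * (a + 1)))) ∧
    (oC = (L + iL (c * (c + 1)) - iL (a * (a + 1)) - iL (b * (b + 1))) *
        (iL (c * (c + 1)) * L - iL (a * (a + 1) * (b * (b + 1))))
        - (L + iL (c * (c + 1))) * (iL (a * (a + 1)) + iL (b * (b + 1)))) := by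
  have ey : e * y = y * e - e := by
    apply smul_half K hchar
    have : e * y + e * y = (y * e + y * e) - ((y + y) * e - e * (y + y)) := by
      rw [add_mul, mul_add]; abel
    rw [this, hye]; abel
  have fy : f * y = y * f + f := by
    apply smul_half K hchar
    have : f * y + f * y = (y * f + y * f) - ((y + y) * f - f * (y + y)) := by
      rw [add_mul, mul_add]; abel
    rw [this, hyf]; abel
  have ef' : e * f = L - y * y + y := by rw [hLam]; abel
  have fe' : f * e = L - y * y - y := by
    have : f * e = e * f - (e * f - f * e) := by abel
    rw [this, hef, ef']; abel
  have eyy : e * (y * y) = y * (y * e) - y * e - y * e + e := by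
    rw [← mul_assoc, ey, sub_mul, mul_assoc, ey, mul_sub]; abel
  have fyy : f * (y * y) = y * (y * f) + y * f + y * f + f := by
    rw [← mul_assoc, fy, add_mul, mul_assoc, fy, mul_add]; abel
  have Ly : Commute L y := by
    have : Commute (e * f) y := by
      change e * f * y = y * (e * f)
      rw [mul_assoc, fy, mul_add, ← mul_assoc, ey, sub_mul, mul_assoc]; abel
    rw [hLam]
    exact this.add_left (((Commute.refl _).mul_left (Commute.refl _)).sub_left (Commute.refl _))
  have hL2 : L = f * e + y * y + y := by rw [fe']; abel
  have eL : e * L = L * e := by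
    have : e * L = e * f * e + e * (y * y) + e * y := by
      conv_lhs => rw [hL2]
      rw [mul_add, mul_add, mul_assoc]
    rw [this, ef', eyy, ey]
    simp only [add_mul, sub_mul, mul_assoc]; abel
  have fL : f * L = L * f := by
    have : f * L = f * e * f + f * (y * y) - f * y := by
      conv_lhs => rw [hLam]
      rw [mul_add, mul_sub, mul_assoc]; abel
    rw [this, fe', fyy, fy]
    simp only [add_mul, sub_mul, mul_assoc]; abel
  have hL' : ∀ p, Commute (iL p) L := fun p => by
    rw [hLam]
    exact ((he' p).mul_right (hf' p)).add_right (((hy' p).mul_right (hy' p)).sub_right (hy' p))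
  have ce := io1_comm iL L hL' e eL he'
  have cf := io1_comm iL L hL' f fL hf'
  have cy := fun p => (io1_comm iL L hL' y Ly.symm hy' p).symm
  obtain ⟨io, hio⟩ : ∃ io, io = eval₂RingHom' (io1 iL L hL') y cy := ⟨_, rfl⟩
  have iC : ∀ p, io (Polynomial.C (Polynomial.C p)) = iL p := fun p => by
    rw [hio]; simp [io1, eval₂RingHom']
  have iX : io (Polynomial.C X) = L := by rw [hio]; simp [io1, eval₂RingHom']
  have iY : io X = y := by rw [hio]; simp [eval₂RingHom']
  have main := core io
    (eval₂RingHom Polynomial.C (X - 1)) (eval₂RingHom Polynomial.C (X + 1)) e f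
    (Polynomial.C (Polynomial.C a)) (Polynomial.C (Polynomial.C b))
    (Polynomial.C (Polynomial.C c)) (Polynomial.C X) X
    (by
      have := io_shift _ y e cy ce (X - 1) (by
        rw [← hio, map_sub, map_one, iY, ey, sub_mul, one_mul])
      rw [hio]; exact this)
    (by
      have := io_shift _ y f cy cf (X + 1) (by
        rw [← hio, map_add, map_one, iY, fy, add_mul, one_mul])
      rw [hio]; exact this)
    (by rw [map_add, map_sub, map_mul, iY, iX, ef'])
    (by rw [map_sub, map_sub, map_mul, iY, iX, fe'])
    (by simp) (by simp) (by simp) (by simp) (by simp)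
    (by simp) (by simp) (by simp) (by simp) (by simp)
    x z A B C D al be ga (by rw [iY, hx]) (by rw [iY, hz])
    (by rw [hA, iY]; simp only [← iC, map_add, map_sub, map_mul, map_one])
    (by rw [hB, iY]; simp only [← iC, map_add, map_sub, map_mul, map_one])
    (by rw [hC]; simp only [← iC, map_add, map_sub, map_mul, map_one])
    (by rw [hD, iY]; simp only [← iC, map_add, map_sub, map_mul, map_one])
    hal hbe hga
  clear hA hB hC hD hal hbe hga
  have half : ∀ w : R, (2 : K)⁻¹ • w + (2 : K)⁻¹ • w = w := fun w => by
    rw [← add_smul, ← two_mul, mul_inv_cancel₀ hchar, one_smul]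
  have h2 : ∀ w : R, io 2 * w = w + w := fun w => by rw [map_ofNat, two_mul]
  obtain ⟨m1, m2, m3⟩ := main
  rw [h2 (io _)] at m1 m2 m3
  simp only [map_add, map_sub, map_mul, map_one, iC, iX] at m1 m2 m3 ⊢
  refine ⟨?_, ?_, ?_⟩
  · apply smul_half K hchar
    rw [← m1, hoA]
    have := half (B * A * C + C * A * B)
    generalize (2 : K)⁻¹ • (B * A * C + C * A * B) = w at *
    rw [← mul_assoc C A B, ← this]
    simp only [map_ofNat, two_mul]; abel
  · apply smul_half K hchar
    rw [← m2, hoB]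
    have := half (C * B * A + A * B * C)
    generalize (2 : K)⁻¹ • (C * B * A + A * B * C) = w at *
    rw [← mul_assoc C B A, ← this]
    simp only [map_ofNat, two_mul]; abel
  · apply smul_half K hchar
    have e1 : A * C * B = A * B * C - (A * D + A * D) := by
      have : C * B = B * C - (D + D) := by rw [← rBC]; abel
      rw [mul_assoc, this, mul_sub, mul_add, mul_assoc]
    have e2 : B * C * A = B * A * C + (B * D + B * D) := by
      have : C * A = A * C + (D + D) := by rw [← rCA]; abel
      rw [mul_assoc, this, mul_add, mul_add, mul_assoc]
    have := half (A * C * B + B * C * A)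
    rw [← m3, hoC]
    generalize (2 : K)⁻¹ • (A * C * B + B * C * A) = w at *
    rw [e1, e2] at this
    simp only [map_ofNat, two_mul]
    rw [← this]; abel

end Inst

section Rels

theorem U_he : h F * e F - e F * h F = e F + e F := by
  have h1 := RingQuot.mkAlgHom_rel F (slRel.he (F := F))
  rw [two_mul] at h1
  simp only [map_sub, map_mul, map_add] at h1
  exact h1

theorem U_hf : h F * f F - f F * h F = -(f F + f F) := by
  have h1 := RingQuot.mkAlgHom_rel F (slRel.hf (F := F))
  rw [two_mul] at h1
  simp only [map_sub, map_mul, map_add, map_neg] at h1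
  exact h1

theorem U_ef : e F * f F - f F * e F = h F := by
  have h1 := RingQuot.mkAlgHom_rel F (slRel.ef (F := F))
  simp only [map_sub, map_mul, map_add] at h1
  exact h1

theorem R_BC : B F * C F - C F * B F = D F + D F := by
  have h1 := RingQuot.mkAlgHom_rel F (racahRel.BC (F := F))
  rw [two_mul] at h1
  simp only [map_sub, map_mul, map_add] at h1
  exact h1

theorem R_CA : C F * A F - A F * C F = D F + D F := by
  have h1 := RingQuot.mkAlgHom_rel F (racahRel.CA (F := F))
  rw [two_mul] at h1
  simp only [map_sub, map_mul, map_add] at h1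
  exact h1

theorem y_add (hchar : (2 : F) ≠ 0) : uy F + uy F = h F := by
  rw [uy, ← add_smul, ← two_mul, mul_inv_cancel₀ hchar, one_smul]

theorem lam_gen {K V : Type} [Field K] [Ring V] [Algebra K V] (hchar : (2 : K) ≠ 0) (w : V) :
    (4 : K)⁻¹ • (w * (w - 2))
      = ((2 : K)⁻¹ • w) * ((2 : K)⁻¹ • w) - (2 : K)⁻¹ • w := by
  have h4 : (4 : K) = 2 * 2 := by norm_num
  rw [h4, mul_inv, mul_sub, smul_sub, smul_mul_smul_comm]
  congr 1
  rw [mul_two, ← two_smul K w, smul_smul, mul_assoc, inv_mul_cancel₀ hchar, mul_one]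

theorem Lam_eq (hchar : (2 : F) ≠ 0) : Lam F = e F * f F + (uy F * uy F - uy F) := by
  rw [Lam, uy]
  exact congrArg _ (lam_gen hchar (h F))

end Rels

theorem statement2 (hchar : (2 : F) ≠ 0) (φ : Racah F →ₐ[F] T F)
    (hA : φ (A F) = Anat F) (hB : φ (B F) = Bnat F)
    (hC : φ (C F) = Cnat F) (hD : φ (D F) = Dnat F) :
    φ (OmegaA F) =
      ((1 : P F) ⊗ₜ[F] Lam F + (pa F * (pa F + 1)) ⊗ₜ[F] (1 : U F)
          - (pb F * (pb F + 1)) ⊗ₜ[F] (1 : U F) - (pc F * (pc F + 1)) ⊗ₜ[F] (1 : U F)) *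
        ((pa F * (pa F + 1)) ⊗ₜ[F] Lam F
          - (pb F * (pb F + 1) * (pc F * (pc F + 1))) ⊗ₜ[F] (1 : U F))
      - ((1 : P F) ⊗ₜ[F] Lam F + (pa F * (pa F + 1)) ⊗ₜ[F] (1 : U F)) *
        ((pb F * (pb F + 1)) ⊗ₜ[F] (1 : U F) + (pc F * (pc F + 1)) ⊗ₜ[F] (1 : U F)) ∧
    φ (OmegaB F) =
      ((1 : P F) ⊗ₜ[F] Lam F + (pb F * (pb F + 1)) ⊗ₜ[F] (1 : U F)
          - (pc F * (pc F + 1)) ⊗ₜ[F] (1 : U F) - (pa F * (pa F + 1)) ⊗ₜ[F] (1 : U F)) *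
        ((pb F * (pb F + 1)) ⊗ₜ[F] Lam F
          - (pc F * (pc F + 1) * (pa F * (pa F + 1))) ⊗ₜ[F] (1 : U F))
      - ((1 : P F) ⊗ₜ[F] Lam F + (pb F * (pb F + 1)) ⊗ₜ[F] (1 : U F)) *
        ((pc F * (pc F + 1)) ⊗ₜ[F] (1 : U F) + (pa F * (pa F + 1)) ⊗ₜ[F] (1 : U F)) ∧
    φ (OmegaC F) =
      ((1 : P F) ⊗ₜ[F] Lam F + (pc F * (pc F + 1)) ⊗ₜ[F] (1 : U F)
          - (pa F * (pa F + 1)) ⊗ₜ[F] (1 : U F) - (pb F * (pb F + 1)) ⊗ₜ[F] (1 : U F)) *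
        ((pc F * (pc F + 1)) ⊗ₜ[F] Lam F
          - (pa F * (pa F + 1) * (pb F * (pb F + 1))) ⊗ₜ[F] (1 : U F))
      - ((1 : P F) ⊗ₜ[F] Lam F + (pc F * (pc F + 1)) ⊗ₜ[F] (1 : U F)) *
        ((pa F * (pa F + 1)) ⊗ₜ[F] (1 : U F) + (pb F * (pb F + 1)) ⊗ₜ[F] (1 : U F)) := by
  have hy := y_add F hchar
  have q : ∀ (p : P F) (u : U F), p ⊗ₜ[F] u
      = p ⊗ₜ[F] (1 : U F) * (1 : P F) ⊗ₜ[F] u := fun p u => by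
    rw [Algebra.TensorProduct.tmul_mul_tmul, one_mul, mul_one]
  have m : ∀ u v : U F, (1 : P F) ⊗ₜ[F] (u * v) = (1 : P F) ⊗ₜ[F] u * (1 : P F) ⊗ₜ[F] v :=
    fun u v => by rw [Algebra.TensorProduct.tmul_mul_tmul, one_mul]
  have ad : ∀ u v : U F, (1 : P F) ⊗ₜ[F] (u + v) = (1 : P F) ⊗ₜ[F] u + (1 : P F) ⊗ₜ[F] v :=
    fun u v => TensorProduct.tmul_add _ _ _
  have sb : ∀ u v : U F, (1 : P F) ⊗ₜ[F] (u - v) = (1 : P F) ⊗ₜ[F] u - (1 : P F) ⊗ₜ[F] v :=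
    fun u v => TensorProduct.tmul_sub _ _ _
  have ng : ∀ u : U F, (1 : P F) ⊗ₜ[F] (-u) = -((1 : P F) ⊗ₜ[F] u) :=
    fun u => TensorProduct.tmul_neg _ _
  have cm : ∀ (u : U F) (p : P F), Commute (p ⊗ₜ[F] (1 : U F)) ((1 : P F) ⊗ₜ[F] u) :=
    fun u p => by
      change p ⊗ₜ[F] (1 : U F) * (1 : P F) ⊗ₜ[F] u = (1 : P F) ⊗ₜ[F] u * p ⊗ₜ[F] (1 : U F)
      rw [Algebra.TensorProduct.tmul_mul_tmul, Algebra.TensorProduct.tmul_mul_tmul, one_mul,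
        mul_one, one_mul, mul_one]
  have main := gen (K := F) (Q := P F) (R := T F) hchar
    (Algebra.TensorProduct.includeLeftRingHom : P F →+* T F)
    ((1 : P F) ⊗ₜ[F] e F) ((1 : P F) ⊗ₜ[F] f F) ((1 : P F) ⊗ₜ[F] uy F)
    ((1 : P F) ⊗ₜ[F] ux F) ((1 : P F) ⊗ₜ[F] uz F) ((1 : P F) ⊗ₜ[F] Lam F)
    (cm _) (cm _) (cm _)
    (by rw [← ad, ← ad, ← m, ← m, ← sb, hy, U_he])
    (by rw [← ad, ← ad, ← m, ← m, ← sb, ← ng, hy, U_hf])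
    (by rw [← ad, ← m, ← m, ← sb, hy, U_ef])
    (by rw [← m, ← m, ← sb, ← ad, Lam_eq F hchar])
    (by rw [← ng, ← sb]; rfl)
    (by rw [← sb]; rfl)
    (pa F) (pb F) (pc F) (φ (A F)) (φ (B F)) (φ (C F)) (φ (D F))
    (φ (alpha F)) (φ (beta F)) (φ (gamma F)) (φ (OmegaA F)) (φ (OmegaB F)) (φ (OmegaC F))
    (by
      rw [hA, Anat, q _ (ux F), q _ (uy F), m]
      rfl)
    (by
      rw [hB, Bnat, q _ (uy F), q _ (uz F), m]
      rfl)
    (by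
      rw [hC, Cnat, q _ (uz F), q _ (ux F), m]
      rfl)
    (by
      rw [hD, Dnat, q _ (ux F), q _ (uy F), q _ (uz F), q _ (ux F * uy F),
        q _ (uy F * uz F), q (pa F - pb F) (uz F * ux F), ad, m, m, m, m, m]
      rfl)
    (by rw [← map_mul, ← map_mul, ← map_sub, ← map_add, R_BC])
    (by rw [← map_mul, ← map_mul, ← map_sub, ← map_add, R_CA])
    (by simp only [alpha, map_add, map_sub, map_mul])
    (by simp only [beta, map_add, map_sub, map_mul])
    (by simp only [gamma, map_add, map_sub, map_mul])
    (by simp only [OmegaA, delta, map_add, map_sub, map_mul, map_smul, pow_two])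
    (by simp only [OmegaB, delta, map_add, map_sub, map_mul, map_smul, pow_two])
    (by simp only [OmegaC, delta, map_add, map_sub, map_mul, map_smul, pow_two])
  rw [q (pa F * (pa F + 1)) (Lam F), q (pb F * (pb F + 1)) (Lam F),
    q (pc F * (pc F + 1)) (Lam F)]
  exact main


end RacahPaper
end
end

section
/- The Racah algebra ℜ contains no zero divisors: for all u, v ∈ ℜ, if u·v = 0 then u = 0 or v = 0. -/
open scoped TensorProduct

noncomputable section

namespace RacahPaper

variable (F : Type) [Field F]

section ops

variable (K : Type) [CommRing K] [Algebra F K]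

def opS (c : K) : Module.End F (ℤ → K) where
  toFun v n := c * v n
  map_add' u v := by ext n; simp [mul_add]
  map_smul' r v := by ext n; simp

def phiK (y t w a d : K) (n : ℤ) : K :=
  (y + n) ^ 4 + 2 * t * (y + n) ^ 3 + (2 * t ^ 2 - 2 * d - 1) * (y + n) ^ 2 + 2 * w * (y + n) - a

def opA (y : K) : Module.End F (ℤ → K) where
  toFun v n := (y + n) * (y + n + 1) * v n + v (n - 1)
  map_add' u v := by ext n; simp; ring
  map_smul' r v := by ext n; simp

def opB (y t w a d : K) : Module.End F (ℤ → K) where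
  toFun v n := (y + t + n) * (y + t + n + 1) * v n + phiK K y t w a d (n + 1) * v (n + 1)
  map_add' u v := by ext n; simp; ring
  map_smul' r v := by ext n; simp

def dK (y t w d : K) (n : ℤ) : K :=
  2 * (y + n) ^ 3 + 3 * (y + n) ^ 2 + (y + n) + t * (3 * (y + n) ^ 2 + 3 * (y + n) + 1)
    + (t ^ 2 - d) * (2 * (y + n) + 1) + w

def opD (y t w a d : K) : Module.End F (ℤ → K) where
  toFun v n := -(y + t + n) * v (n - 1) - dK K y t w d n * v n
    - (y + n + 1) * phiK K y t w a d (n + 1) * v (n + 1)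
  map_add' u v := by ext n; simp; ring
  map_smul' r v := by ext n; simp; module

variable (y t w a d : K)

theorem opA_apply (v : ℤ → K) (n : ℤ) :
    opA F K y v n = (y + n) * (y + n + 1) * v n + v (n - 1) := rfl
theorem opB_apply (v : ℤ → K) (n : ℤ) : opB F K y t w a d v n =
    (y + t + n) * (y + t + n + 1) * v n + phiK K y t w a d (n + 1) * v (n + 1) := rfl
theorem opD_apply (v : ℤ → K) (n : ℤ) : opD F K y t w a d v n =
    -(y + t + n) * v (n - 1) - dK K y t w d n * v n
    - (y + n + 1) * phiK K y t w a d (n + 1) * v (n + 1) := rfl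
theorem opS_apply (c : K) (v : ℤ → K) (n : ℤ) : opS F K c v n = c * v n := rfl

theorem opS_commA (c : K) : opS F K c * opA F K y = opA F K y * opS F K c := by
  ext v n; simp only [Module.End.mul_apply, opA_apply, opS_apply]; ring
theorem opS_commB (c : K) : opS F K c * opB F K y t w a d = opB F K y t w a d * opS F K c := by
  ext v n; simp only [Module.End.mul_apply, opB_apply, opS_apply]; ring
theorem opS_commD (c : K) : opS F K c * opD F K y t w a d = opD F K y t w a d * opS F K c := by
  ext v n; simp only [Module.End.mul_apply, opD_apply, opS_apply]; ring
theorem opS_commS (c c' : K) : opS F K c * opS F K c' = opS F K c' * opS F K c := by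
  ext v n; simp only [Module.End.mul_apply, opS_apply]; ring

theorem op_AB : opA F K y * opB F K y t w a d - opB F K y t w a d * opA F K y
    = 2 * opD F K y t w a d := by
  ext v n
  have h2 : (2 * opD F K y t w a d) v n = 2 * opD F K y t w a d v n := by
    rw [two_mul, two_mul]; rfl
  rw [h2]
  simp only [Module.End.mul_apply, opA_apply, opB_apply, opD_apply, LinearMap.sub_apply,
    Pi.sub_apply, dK, phiK]
  push_cast
  have e1 : n - 1 + 1 = n := by ring
  have e2 : n + 1 - 1 = n := by ring
  rw [e1, e2]
  ring

def opC : Module.End F (ℤ → K) := opS F K (2 * d) - opA F K y - opB F K y t w a d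

theorem op_alpha : opA F K y * opD F K y t w a d - opD F K y t w a d * opA F K y
    + opA F K y * opC F K y t w a d - opB F K y t w a d * opA F K y = opS F K a := by
  ext v n
  simp only [opC, Module.End.mul_apply, opA_apply, opB_apply, opD_apply, opS_apply,
    LinearMap.sub_apply, LinearMap.add_apply, Pi.add_apply, Pi.sub_apply, dK, phiK]
  push_cast
  have e1 : n - 1 + 1 = n := by ring
  have e2 : n + 1 - 1 = n := by ring
  rw [e1, e2]
  ring

def betaK : K := t ^ 4 - (2 * d + 1) * t ^ 2 - 2 * w * t - a

theorem op_beta : opB F K y t w a d * opD F K y t w a d - opD F K y t w a d * opB F K y t w a d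
    + opB F K y t w a d * opA F K y - opC F K y t w a d * opB F K y t w a d
    = opS F K (betaK K t w a d) := by
  ext v n
  simp only [opC, Module.End.mul_apply, opA_apply, opB_apply, opD_apply, opS_apply,
    LinearMap.sub_apply, LinearMap.add_apply, Pi.add_apply, Pi.sub_apply, dK, phiK, betaK]
  push_cast
  have e1 : n - 1 + 1 = n := by ring
  have e2 : n + 1 - 1 = n := by ring
  rw [e1, e2]
  ring

theorem op_gamma : opC F K y t w a d * opD F K y t w a d - opD F K y t w a d * opC F K y t w a d
    + opC F K y t w a d * opB F K y t w a d - opA F K y * opC F K y t w a d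
    = opS F K (-a - betaK K t w a d) := by
  have h := opS_commD F K y t w a d (2 * d)
  have hs : opS F K (-a - betaK K t w a d) = - opS F K a - opS F K (betaK K t w a d) := by
    ext v n
    simp only [LinearMap.sub_apply, LinearMap.neg_apply, Pi.sub_apply, Pi.neg_apply, opS_apply]
    ring
  rw [hs]
  rw [← op_beta F K y t w a d, ← op_alpha F K y t w a d]
  have h' : opC F K y t w a d * opD F K y t w a d - opD F K y t w a d * opC F K y t w a d
    = - (opA F K y * opD F K y t w a d - opD F K y t w a d * opA F K y)
      - (opB F K y t w a d * opD F K y t w a d - opD F K y t w a d * opB F K y t w a d) := by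
    simp only [opC, sub_mul, mul_sub, h]
    abel
  rw [h']
  abel

def opGen : Fin 4 → Module.End F (ℤ → K) :=
  ![opA F K y, opB F K y t w a d, opC F K y t w a d, opD F K y t w a d]

theorem opS_commGen (c : K) (i : Fin 4) :
    opS F K c * opGen F K y t w a d i = opGen F K y t w a d i * opS F K c := by
  have h1 := opS_commA F K y c
  have h2 := opS_commB F K y t w a d c
  have h3 := opS_commD F K y t w a d c
  have h4 := opS_commS F K c (2 * d)
  fin_cases i
  · exact h1
  · exact h2
  · show opS F K c * opC F K y t w a d = opC F K y t w a d * opS F K c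
    simp only [opC, mul_sub, sub_mul, h1, h2, h4]
  · exact h3

def rho0 : FreeAlgebra F (Fin 4) →ₐ[F] Module.End F (ℤ → K) :=
  FreeAlgebra.lift F (opGen F K y t w a d)

theorem rho0_A : rho0 F K y t w a d (fA F) = opA F K y := by simp [rho0, fA, opGen]
theorem rho0_B : rho0 F K y t w a d (fB F) = opB F K y t w a d := by simp [rho0, fB, opGen]
theorem rho0_C : rho0 F K y t w a d (fC F) = opC F K y t w a d := by simp [rho0, fC, opGen]
theorem rho0_D : rho0 F K y t w a d (fD F) = opD F K y t w a d := by simp [rho0, fD, opGen]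
theorem rho0_i (i : Fin 4) : rho0 F K y t w a d (FreeAlgebra.ι F i) = opGen F K y t w a d i := by
  simp [rho0]
theorem rho0_alpha : rho0 F K y t w a d (falpha F) = opS F K a := by
  simp only [falpha, map_add, map_sub, map_mul, rho0_A, rho0_B, rho0_C, rho0_D, op_alpha]
theorem rho0_beta : rho0 F K y t w a d (fbeta F) = opS F K (betaK K t w a d) := by
  simp only [fbeta, map_add, map_sub, map_mul, rho0_A, rho0_B, rho0_C, rho0_D, op_beta]
theorem rho0_gamma :
    rho0 F K y t w a d (fgamma F) = opS F K (-a - betaK K t w a d) := by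
  simp only [fgamma, map_add, map_sub, map_mul, rho0_A, rho0_B, rho0_C, rho0_D, op_gamma]

theorem rho0_rel {p q : FreeAlgebra F (Fin 4)} (hpq : racahRel F p q) :
    rho0 F K y t w a d p = rho0 F K y t w a d q := by
  have h1 := opS_commA F K y (2 * d)
  have h2 := opS_commB F K y t w a d (2 * d)
  have h0 := op_AB F K y t w a d
  induction hpq with
  | AB => simp only [map_sub, map_mul, rho0_A, rho0_B, rho0_D, h0, map_ofNat]
  | BC =>
    simp only [map_sub, map_mul, rho0_C, rho0_B, rho0_D, map_ofNat, ← h0]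
    simp only [opC, mul_sub, sub_mul, h2]; abel
  | CA =>
    simp only [map_sub, map_mul, rho0_C, rho0_A, rho0_D, map_ofNat, ← h0]
    simp only [opC, mul_sub, sub_mul, h1]; abel
  | calpha i => simp only [map_mul, rho0_i, rho0_alpha, opS_commGen]
  | cbeta i => simp only [map_mul, rho0_i, rho0_beta, opS_commGen]
  | cgamma i => simp only [map_mul, rho0_i, rho0_gamma, opS_commGen]

def rho : Racah F →ₐ[F] Module.End F (ℤ → K) :=
  RingQuot.liftAlgHom F ⟨rho0 F K y t w a d, fun _ _ h => rho0_rel F K y t w a d h⟩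

theorem rho_A : rho F K y t w a d (A F) = opA F K y := by simp [rho, A, rho0_A]
theorem rho_B : rho F K y t w a d (B F) = opB F K y t w a d := by simp [rho, B, rho0_B]
theorem rho_C : rho F K y t w a d (C F) = opC F K y t w a d := by simp [rho, C, rho0_C]
theorem rho_D : rho F K y t w a d (D F) = opD F K y t w a d := by simp [rho, D, rho0_D]
theorem rho_alpha : rho F K y t w a d (alpha F) = opS F K a := by
  simp only [alpha, map_add, map_sub, map_mul, rho_A, rho_B, rho_C, rho_D, op_alpha]
theorem rho_beta : rho F K y t w a d (beta F) = opS F K (betaK K t w a d) := by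
  simp only [beta, map_add, map_sub, map_mul, rho_A, rho_B, rho_C, rho_D, op_beta]
theorem rho_delta : rho F K y t w a d (delta F) = opS F K (2 * d) := by
  simp only [delta, map_add, rho_A, rho_B, rho_C, opC]; abel

end ops

section pbw

/-- The six PBW generators. -/
def gen_s4 : Fin 6 → Racah F := ![A F, B F, D F, beta F, alpha F, delta F]

/-- Weights of the PBW generators. -/
def wt : Fin 6 → ℕ := ![2, 2, 3, 4, 4, 2]

def word (l : List (Fin 6)) : Racah F := (l.map (gen_s4 F)).prod

def wtl (l : List (Fin 6)) : ℕ := (l.map wt).sum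

def W (n : ℕ) : Submodule F (Racah F) :=
  Submodule.span F {u | ∃ l, wtl l < n ∧ u = word F l}

theorem rel_AB : A F * B F - B F * A F = 2 * D F := by
  have h := RingQuot.mkAlgHom_rel F (racahRel.AB (F := F))
  simp only [map_sub, map_mul, map_ofNat] at h
  exact h
theorem rel_BC : B F * C F - C F * B F = 2 * D F := by
  have h := RingQuot.mkAlgHom_rel F (racahRel.BC (F := F))
  simp only [map_sub, map_mul, map_ofNat] at h
  exact h
theorem rel_CA : C F * A F - A F * C F = 2 * D F := by
  have h := RingQuot.mkAlgHom_rel F (racahRel.CA (F := F))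
  simp only [map_sub, map_mul, map_ofNat] at h
  exact h

theorem mk_alpha : RingQuot.mkAlgHom F (racahRel F) (falpha F) = alpha F := by
  simp only [falpha, alpha, map_add, map_sub, map_mul]; rfl
theorem mk_beta : RingQuot.mkAlgHom F (racahRel F) (fbeta F) = beta F := by
  simp only [fbeta, beta, map_add, map_sub, map_mul]; rfl

theorem central_of {z : Racah F} (hz : ∀ i, Commute z
    (RingQuot.mkAlgHom F (racahRel F) (FreeAlgebra.ι F i))) (u : Racah F) : Commute z u := by
  obtain ⟨x, rfl⟩ := RingQuot.mkAlgHom_surjective F (racahRel F) u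
  induction x using FreeAlgebra.induction with
  | grade0 r => rw [AlgHom.commutes]; exact (Algebra.commutes r z).symm
  | grade1 i => exact hz i
  | mul a b ha hb => rw [map_mul]; exact ha.mul_right hb
  | add a b ha hb => rw [map_add]; exact ha.add_right hb

theorem alpha_central (u : Racah F) : Commute (alpha F) u := by
  refine central_of F (fun i => ?_) u
  have h := RingQuot.mkAlgHom_rel F (racahRel.calpha (F := F) i)
  rwa [map_mul, map_mul, mk_alpha] at h
theorem beta_central (u : Racah F) : Commute (beta F) u := by
  refine central_of F (fun i => ?_) u
  have h := RingQuot.mkAlgHom_rel F (racahRel.cbeta (F := F) i)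
  rwa [map_mul, map_mul, mk_beta] at h

theorem delta_central (hchar : (2 : F) ≠ 0) (u : Racah F) : Commute (delta F) u := by
  have hA : Commute (delta F) (A F) := by
    have h1 := rel_AB F
    have h2 := rel_CA F
    rw [commute_iff_eq, ← sub_eq_zero]
    simp only [delta, add_mul, mul_add]
    have h3 := sub_eq_zero.2 (h2.trans h1.symm)
    rw [← h3]; abel
  have hB : Commute (delta F) (B F) := by
    have h1 := rel_AB F
    have h2 := rel_BC F
    rw [commute_iff_eq, ← sub_eq_zero]
    simp only [delta, add_mul, mul_add]
    have h3 := sub_eq_zero.2 (h1.trans h2.symm)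
    rw [← h3]; abel
  have hC : Commute (delta F) (C F) := by
    have : C F = delta F - A F - B F := by simp only [delta]; abel
    rw [this]
    exact ((Commute.refl _).sub_right hA).sub_right hB
  have hD : Commute (delta F) (D F) := by
    have h2 : Commute (delta F) (2 * D F) := by
      rw [← rel_AB]
      exact (hA.mul_right hB).sub_right (hB.mul_right hA)
    have h3 : D F = (2 : F)⁻¹ • (2 * D F) := by
      rw [two_mul, ← two_smul F (D F), smul_smul, inv_mul_cancel₀ hchar, one_smul]
    rw [h3]
    exact h2.smul_right _
  refine central_of F (fun i => ?_) u
  fin_cases i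
  · exact hA
  · exact hB
  · exact hC
  · exact hD

theorem word_mem_W {l : List (Fin 6)} {n : ℕ} (h : wtl l < n) : word F l ∈ W F n :=
  Submodule.subset_span ⟨l, h, rfl⟩

theorem wtl_cons (x : Fin 6) (l) : wtl (x :: l) = wt x + wtl l := by simp [wtl]
theorem word_cons (x : Fin 6) (l) : word F (x :: l) = gen_s4 F x * word F l := by simp [word]

theorem gen_mul_W (x : Fin 6) {n : ℕ} {u : Racah F} (h : u ∈ W F n) :
    gen_s4 F x * u ∈ W F (wt x + n) := by
  induction h using Submodule.span_induction with
  | mem u hu =>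
    obtain ⟨l, hl, rfl⟩ := hu
    rw [← word_cons]
    exact word_mem_W F (by rw [wtl_cons]; omega)
  | zero => simp
  | add u v _ _ hu hv => rw [mul_add]; exact add_mem hu hv
  | smul c u _ hu => rw [mul_smul_comm]; exact Submodule.smul_mem _ _ hu

theorem W_mul_word (l : List (Fin 6)) {n : ℕ} {u : Racah F} (h : u ∈ W F n) :
    u * word F l ∈ W F (n + wtl l) := by
  induction h using Submodule.span_induction with
  | mem u hu =>
    obtain ⟨l', hl, rfl⟩ := hu
    have : word F l' * word F l = word F (l' ++ l) := by simp [word]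
    rw [this]
    refine word_mem_W F ?_
    have : wtl (l' ++ l) = wtl l' + wtl l := by simp [wtl]
    omega
  | zero => simp
  | add u v _ _ hu hv => rw [add_mul]; exact add_mem hu hv
  | smul c u _ hu => rw [smul_mul_assoc]; exact Submodule.smul_mem _ _ hu

theorem two_D_mem : 2 * D F ∈ W F 4 := by
  have : D F ∈ W F 4 := by
    have h := word_mem_W F (l := [2]) (n := 4) (by decide)
    simpa [word, gen_s4] using h
  rw [two_mul]; exact add_mem this this

theorem mul_mem_W {x y : Fin 6} {n : ℕ} (h : wt x + wt y < n) : gen_s4 F x * gen_s4 F y ∈ W F n := by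
  have h := word_mem_W F (l := [x, y]) (n := n) (by simpa [wtl] using h)
  simpa [word] using h

theorem comm_AD : A F * D F - D F * A F ∈ W F 5 := by
  have e : A F * D F - D F * A F = alpha F - A F * delta F + A F * A F + A F * B F
      + B F * A F := by
    simp only [alpha, delta, mul_add]; abel
  rw [e]
  have h0 : alpha F ∈ W F 5 := by
    have h := word_mem_W F (l := [4]) (n := 5) (by decide)
    simpa [word, gen_s4] using h
  have h1 : A F * delta F ∈ W F 5 := mul_mem_W F (x := 0) (y := 5) (by decide)
  have h2 : A F * A F ∈ W F 5 := mul_mem_W F (x := 0) (y := 0) (by decide)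
  have h3 : A F * B F ∈ W F 5 := mul_mem_W F (x := 0) (y := 1) (by decide)
  have h4 : B F * A F ∈ W F 5 := mul_mem_W F (x := 1) (y := 0) (by decide)
  exact add_mem (add_mem (add_mem (sub_mem h0 h1) h2) h3) h4

theorem comm_BD : B F * D F - D F * B F ∈ W F 5 := by
  have e : B F * D F - D F * B F = beta F + delta F * B F - B F * B F - A F * B F
      - B F * A F := by
    simp only [beta, delta, add_mul]; abel
  rw [e]
  have h0 : beta F ∈ W F 5 := by
    have h := word_mem_W F (l := [3]) (n := 5) (by decide)
    simpa [word, gen_s4] using h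
  have h1 : delta F * B F ∈ W F 5 := mul_mem_W F (x := 5) (y := 1) (by decide)
  have h2 : B F * B F ∈ W F 5 := mul_mem_W F (x := 1) (y := 1) (by decide)
  have h3 : A F * B F ∈ W F 5 := mul_mem_W F (x := 0) (y := 1) (by decide)
  have h4 : B F * A F ∈ W F 5 := mul_mem_W F (x := 1) (y := 0) (by decide)
  exact sub_mem (sub_mem (sub_mem (add_mem h0 h1) h2) h3) h4

theorem comm_gen (hchar : (2 : F) ≠ 0) (x y : Fin 6) :
    gen_s4 F x * gen_s4 F y - gen_s4 F y * gen_s4 F x ∈ W F (wt x + wt y) := by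
  have hz : ∀ {p q : Racah F} {n : ℕ}, Commute p q → p * q - q * p ∈ W F n := by
    intro p q n h
    rw [h.eq, sub_self]; exact zero_mem _
  have hn : ∀ {p q : Racah F} {n : ℕ}, p * q - q * p ∈ W F n → q * p - p * q ∈ W F n := by
    intro p q n h
    rw [← neg_sub]; exact neg_mem h
  have hAB : A F * B F - B F * A F ∈ W F 4 := by rw [rel_AB]; exact two_D_mem F
  have key : ∀ z : Fin 6, (∀ u, Commute (gen_s4 F z) u) ∨ z = 0 ∨ z = 1 ∨ z = 2 := by
    intro z
    fin_cases z
    · simp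
    · simp
    · simp
    · exact Or.inl (beta_central F)
    · exact Or.inl (alpha_central F)
    · exact Or.inl (delta_central F hchar)
  rcases key x with h | hx
  · exact hz (h _)
  rcases key y with h | hy
  · exact hz (h _).symm
  rcases hx with rfl | rfl | rfl <;> rcases hy with rfl | rfl | rfl
  · exact hz (Commute.refl _)
  · exact hAB
  · exact comm_AD F
  · exact hn hAB
  · exact hz (Commute.refl _)
  · exact comm_BD F
  · exact hn (comm_AD F)
  · exact hn (comm_BD F)
  · exact hz (Commute.refl _)

theorem wtl_perm {l l' : List (Fin 6)} (h : l.Perm l') : wtl l = wtl l' :=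
  (h.map wt).sum_eq

theorem word_perm (hchar : (2 : F) ≠ 0) {l l' : List (Fin 6)} (h : l.Perm l') :
    word F l - word F l' ∈ W F (wtl l) := by
  induction h with
  | nil => simp
  | cons x _ ih =>
    rw [word_cons, word_cons, ← mul_sub, wtl_cons]
    exact gen_mul_W F x ih
  | swap x y l =>
    simp only [word_cons, wtl_cons, ← mul_assoc, ← sub_mul, ← add_assoc]
    exact W_mul_word F l (comm_gen F hchar y x)
  | trans h1 h2 ih1 ih2 =>
    rw [← wtl_perm h1] at ih2
    have := add_mem ih1 ih2
    simpa using this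

def mon (m : Multiset (Fin 6)) : Racah F := word F m.toList

theorem word_mem_span (hchar : (2 : F) ≠ 0) : ∀ n : ℕ, ∀ l : List (Fin 6), wtl l < n →
    word F l ∈ Submodule.span F (Set.range (mon F)) := by
  intro n
  induction n with
  | zero => intro l h; omega
  | succ n ih =>
    intro l hl
    have hp : l.Perm (l : Multiset (Fin 6)).toList := by
      rw [← Multiset.coe_eq_coe, Multiset.coe_toList]
    have h1 := word_perm F hchar hp
    have h2 : W F (wtl l) ≤ Submodule.span F (Set.range (mon F)) := by
      refine Submodule.span_le.2 ?_
      rintro _ ⟨l', hl', rfl⟩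
      exact ih l' (by omega)
    have h3 : word F (l : Multiset (Fin 6)).toList ∈ Submodule.span F (Set.range (mon F)) :=
      Submodule.subset_span ⟨_, rfl⟩
    have := add_mem (h2 h1) h3
    simpa using this

theorem span_mon (hchar : (2 : F) ≠ 0) (u : Racah F) :
    u ∈ Submodule.span F (Set.range (mon F)) := by
  have hw : ∀ l, word F l ∈ Submodule.span F (Set.range (mon F)) :=
    fun l => word_mem_span F hchar _ l (Nat.lt_succ_self _)
  -- closure under left multiplication by generators
  have hg : ∀ i v, v ∈ Submodule.span F (Set.range (mon F)) →
      gen_s4 F i * v ∈ Submodule.span F (Set.range (mon F)) := by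
    intro i v hv
    induction hv using Submodule.span_induction with
    | mem v hv =>
      obtain ⟨m, rfl⟩ := hv
      rw [mon, ← word_cons]; exact hw _
    | zero => simp
    | add u v _ _ hu hv => rw [mul_add]; exact add_mem hu hv
    | smul c u _ hu => rw [mul_smul_comm]; exact Submodule.smul_mem _ _ hu
  have hall : ∀ u v : Racah F, v ∈ Submodule.span F (Set.range (mon F)) →
      u * v ∈ Submodule.span F (Set.range (mon F)) := by
    intro u
    obtain ⟨x, rfl⟩ := RingQuot.mkAlgHom_surjective F (racahRel F) u
    induction x using FreeAlgebra.induction with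
    | grade0 r =>
      intro v hv
      rw [AlgHom.commutes, ← Algebra.smul_def]; exact Submodule.smul_mem _ _ hv
    | grade1 i =>
      intro v hv
      fin_cases i
      · exact hg 0 v hv
      · exact hg 1 v hv
      · have : C F * v = gen_s4 F 5 * v - gen_s4 F 0 * v - gen_s4 F 1 * v := by
          show C F * v = delta F * v - A F * v - B F * v
          simp only [delta, add_mul]; abel
        show C F * v ∈ _
        rw [this]
        exact sub_mem (sub_mem (hg 5 v hv) (hg 0 v hv)) (hg 1 v hv)
      · exact hg 2 v hv
    | mul a b ha hb => intro v hv; rw [map_mul, mul_assoc]; exact ha _ (hb _ hv)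
    | add a b ha hb => intro v hv; rw [map_add, add_mul]; exact add_mem (ha _ hv) (hb _ hv)
  have h1 : (1 : Racah F) ∈ Submodule.span F (Set.range (mon F)) := by
    have := hw []
    simpa [word] using this
  simpa using hall u 1 h1

end pbw

section symb

open Polynomial

abbrev K1 := MvPolynomial (Fin 3) F
abbrev K2 := Polynomial (K1 F)
abbrev K3 := Polynomial (K2 F)

def kt : K1 F := MvPolynomial.X 0
def ka : K1 F := MvPolynomial.X 1
def kd : K1 F := MvPolynomial.X 2

def G (d : ℕ) (s : ℤ) (k : ℕ) (v : ℤ → K3 F) : Prop :=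
  (∀ n, ∀ m, d < m → (v n).coeff m = 0) ∧ (∀ n, s < n → (v n).coeff d = 0) ∧
    ∀ j, k < j → ((v s).coeff d).coeff j = 0

def Sym (T : Module.End F (ℤ → K3 F)) (d : ℕ) (s : ℤ) (k : ℕ) (Q : K1 F) : Prop :=
  ∀ d' s' k' v, G F d' s' k' v → G F (d + d') (s + s') (k + k') (T v) ∧
    ((T v (s + s')).coeff (d + d')).coeff (k + k') = Q * ((v s').coeff d').coeff k'

theorem Sym.mul {T T' : Module.End F (ℤ → K3 F)} {d d' s s' k k' Q Q'}
    (h : Sym F T d s k Q) (h' : Sym F T' d' s' k' Q') :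
    Sym F (T * T') (d + d') (s + s') (k + k') (Q * Q') := by
  intro d1 s1 k1 v hv
  obtain ⟨h1, h2⟩ := h' d1 s1 k1 v hv
  obtain ⟨h3, h4⟩ := h _ _ _ _ h1
  rw [Module.End.mul_apply, add_assoc, add_assoc, add_assoc]
  exact ⟨h3, by rw [h4, h2, mul_assoc]⟩

theorem Sym.one : Sym F 1 0 0 0 1 := by
  intro d s k v hv
  simpa using hv

theorem Sym.zero (d s k) : Sym F 0 d s k 0 := by
  intro d' s' k' v hv
  refine ⟨⟨?_, ?_, ?_⟩, ?_⟩ <;> simp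

theorem Sym.add {T T' : Module.End F (ℤ → K3 F)} {d s k Q Q'}
    (h : Sym F T d s k Q) (h' : Sym F T' d s k Q') : Sym F (T + T') d s k (Q + Q') := by
  intro d1 s1 k1 v hv
  obtain ⟨⟨a1, a2, a3⟩, a4⟩ := h d1 s1 k1 v hv
  obtain ⟨⟨b1, b2, b3⟩, b4⟩ := h' d1 s1 k1 v hv
  refine ⟨⟨?_, ?_, ?_⟩, ?_⟩
  · intro n m hm; simp [a1 n m hm, b1 n m hm]
  · intro n hn; simp [a2 n hn, b2 n hn]
  · intro j hj; simp [a3 j hj, b3 j hj]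
  · simp [a4, b4, add_mul]

theorem Sym.smul {T : Module.End F (ℤ → K3 F)} {d s k Q} (c : F)
    (h : Sym F T d s k Q) : Sym F (c • T) d s k (c • Q) := by
  intro d1 s1 k1 v hv
  obtain ⟨⟨a1, a2, a3⟩, a4⟩ := h d1 s1 k1 v hv
  refine ⟨⟨?_, ?_, ?_⟩, ?_⟩
  · intro n m hm; simp [a1 n m hm]
  · intro n hn; simp [a2 n hn]
  · intro j hj; simp [a3 j hj]
  · simp [a4]

theorem Sym.lower {T : Module.End F (ℤ → K3 F)} {d s k Q d' s' k'}
    (h : Sym F T d s k Q) (hlt : d < d' ∨ (d = d' ∧ s < s') ∨ (d = d' ∧ s = s' ∧ k < k')) :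
    Sym F T d' s' k' 0 := by
  intro d1 s1 k1 v hv
  obtain ⟨⟨a1, a2, a3⟩, a4⟩ := h d1 s1 k1 v hv
  rcases hlt with hlt | ⟨rfl, hlt⟩ | ⟨rfl, rfl, hlt⟩
  · refine ⟨⟨?_, ?_, ?_⟩, ?_⟩
    · intro n m hm; exact a1 n m (by omega)
    · intro n hn; exact a1 n _ (by omega)
    · intro j hj; rw [a1 _ _ (by omega), coeff_zero]
    · rw [a1 _ _ (by omega), coeff_zero, zero_mul]
  · refine ⟨⟨a1, ?_, ?_⟩, ?_⟩
    · intro n hn; exact a2 n (by omega)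
    · intro j hj; rw [a2 _ (by omega), coeff_zero]
    · rw [a2 _ (by omega), coeff_zero, zero_mul]
  · refine ⟨⟨a1, a2, ?_⟩, ?_⟩
    · intro j hj; exact a3 j (by omega)
    · rw [a3 _ (by omega), zero_mul]

theorem Sym.congr {T : Module.End F (ℤ → K3 F)} {d s k Q d' s' k' Q'}
    (h : Sym F T d s k Q) (h1 : d = d') (h2 : s = s') (h3 : k = k') (h4 : Q = Q') :
    Sym F T d' s' k' Q' := by
  subst h1 h2 h3 h4; exact h

/-- Scalars independent of the two polynomial variables. -/
theorem Sym_S (c : K1 F) : Sym F (opS F (K3 F) (Polynomial.C (Polynomial.C c))) 0 0 0 c := by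
  intro d s k v ⟨a1, a2, a3⟩
  simp only [zero_add]
  refine ⟨⟨?_, ?_, ?_⟩, ?_⟩
  · intro n m hm; simp [opS_apply, a1 n m hm]
  · intro n hn; simp [opS_apply, a2 n hn]
  · intro j hj; simp [opS_apply, a3 j hj]
  · simp [opS_apply]

theorem coeff_lin (p q r : K2 F) (f : K3 F) (m : ℕ) :
    ((Polynomial.C p + Polynomial.C q * X) * f).coeff (m + 1) = p * f.coeff (m + 1) + q * f.coeff m := by
  rw [add_mul, coeff_add, coeff_C_mul, mul_assoc, coeff_C_mul, coeff_X_mul]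

/-- The scalar `Polynomial.C (Polynomial.C p) + Polynomial.C (Polynomial.C q) * X` -/
theorem Sym_S1 (p q : K1 F) : Sym F (opS F (K3 F) (Polynomial.C (Polynomial.C p) + Polynomial.C (Polynomial.C q) * X)) 1 0 0 q := by
  intro d s k v ⟨a1, a2, a3⟩
  simp only [zero_add, add_comm 1 d]
  refine ⟨⟨?_, ?_, ?_⟩, ?_⟩
  · intro n m hm
    obtain ⟨m, rfl⟩ : ∃ m', m = m' + 1 := ⟨m - 1, by omega⟩
    rw [opS_apply, coeff_lin F _ _ 0, a1 _ _ (by omega), a1 _ _ (by omega)]; simp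
  · intro n hn
    rw [opS_apply, coeff_lin F _ _ 0, a1 _ _ (by omega), a2 _ (by omega)]; simp
  · intro j hj
    rw [opS_apply, coeff_lin F _ _ 0, a1 _ _ (by omega)]; simp [a3 j hj]
  · rw [opS_apply, coeff_lin F _ _ 0, a1 _ _ (by omega)]; simp

abbrev gy : K3 F := Polynomial.C X
abbrev gt : K3 F := Polynomial.C (Polynomial.C (kt F))
abbrev ga : K3 F := Polynomial.C (Polynomial.C (ka F))
abbrev gd : K3 F := Polynomial.C (Polynomial.C (kd F))

theorem Sym_A : Sym F (opA F (K3 F) (gy F)) 0 1 0 1 := by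
  intro d s k v ⟨a1, a2, a3⟩
  have e : ∀ n : ℤ, opA F (K3 F) (gy F) v n = Polynomial.C ((X + (n : K2 F)) * (X + (n : K2 F) + 1)) * v n
      + v (n - 1) := by
    intro n; rw [opA_apply]; simp
  simp only [zero_add]
  refine ⟨⟨?_, ?_, ?_⟩, ?_⟩
  · intro n m hm; rw [e, coeff_add, coeff_C_mul, a1 n m hm, a1 _ m hm]; simp
  · intro n hn; rw [e, coeff_add, coeff_C_mul, a2 n (by omega), a2 _ (by omega)]; simp
  · intro j hj
    rw [e, coeff_add, coeff_C_mul, a2 _ (by omega), show 1 + s - 1 = s by ring]; simp [a3 j hj]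
  · rw [e, coeff_add, coeff_C_mul, a2 _ (by omega), show 1 + s - 1 = s by ring]; simp

theorem phi_form (n : ℤ) : ∃ p : K2 F,
    phiK (K3 F) (gy F) (gt F) X (ga F) (gd F) n = Polynomial.C p + Polynomial.C (2 * (X + (n : K2 F))) * X := by
  refine ⟨(X + (n : K2 F)) ^ 4 + 2 * Polynomial.C (kt F) * (X + (n : K2 F)) ^ 3
    + (2 * Polynomial.C (kt F) ^ 2 - 2 * Polynomial.C (kd F) - 1) * (X + (n : K2 F)) ^ 2 - Polynomial.C (ka F), ?_⟩
  rw [phiK]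
  simp only [map_add, map_sub, map_mul, map_pow, map_ofNat, map_one, map_intCast]
  ring

theorem Sym_B : Sym F (opB F (K3 F) (gy F) (gt F) X (ga F) (gd F)) 1 (-1) 1 2 := by
  intro d s k v ⟨a1, a2, a3⟩
  have e : ∀ n : ℤ, ∃ p q : K2 F, ∀ m,
      (opB F (K3 F) (gy F) (gt F) X (ga F) (gd F) v n).coeff (m + 1) =
      q * (v n).coeff (m + 1) + (p * (v (n + 1)).coeff (m + 1)
        + (2 * (X + ((n + 1 : ℤ) : K2 F))) * (v (n + 1)).coeff m) := by
    intro n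
    obtain ⟨p, hp⟩ := phi_form F (n + 1)
    refine ⟨p, (X + Polynomial.C (kt F) + (n : K2 F)) * (X + Polynomial.C (kt F) + (n : K2 F) + 1), fun m => ?_⟩
    have e0 : (gy F + gt F + (n : K3 F)) * (gy F + gt F + (n : K3 F) + 1) =
        Polynomial.C ((X + Polynomial.C (kt F) + (n : K2 F))
          * (X + Polynomial.C (kt F) + (n : K2 F) + 1)) := by
      simp only [map_add, map_mul, map_neg, map_one, map_intCast]
    rw [opB_apply, hp, coeff_add, coeff_lin F _ _ 0, e0, coeff_C_mul]
  have e3 : ∀ (g : K2 F) (c : ℤ) (j : ℕ), (2 * (X + (c : K2 F)) * g).coeff (j + 1)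
      = 2 * g.coeff j + 2 * c * g.coeff (j + 1) := by
    intro g c j
    have : 2 * (X + (c : K2 F)) * g = Polynomial.C 2 * (X * g) + Polynomial.C (2 * (c : K1 F)) * g := by
      simp only [map_mul, map_ofNat, map_intCast]; ring
    rw [this, coeff_add, coeff_C_mul, coeff_C_mul, coeff_X_mul]
  simp only [add_comm 1 d, add_comm 1 k]
  refine ⟨⟨?_, ?_, ?_⟩, ?_⟩
  · intro n m hm
    obtain ⟨m, rfl⟩ : ∃ m', m = m' + 1 := ⟨m - 1, by omega⟩
    obtain ⟨p, q, h⟩ := e n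
    rw [h, a1 _ _ (by omega), a1 _ _ (by omega), a1 _ _ (by omega)]; simp
  · intro n hn
    obtain ⟨p, q, h⟩ := e n
    rw [h, a1 _ _ (by omega), a1 _ _ (by omega), a2 _ (by omega)]; simp
  · intro j hj
    obtain ⟨j, rfl⟩ : ∃ m', j = m' + 1 := ⟨j - 1, by omega⟩
    obtain ⟨p, q, h⟩ := e (-1 + s)
    rw [h, a1 _ _ (by omega), a1 _ _ (by omega), show -1 + s + 1 = s by ring, mul_zero, mul_zero,
      zero_add, zero_add, e3, a3 _ (by omega), a3 _ (by omega)]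
    simp
  · obtain ⟨p, q, h⟩ := e (-1 + s)
    rw [h, a1 _ _ (by omega), a1 _ _ (by omega), show -1 + s + 1 = s by ring, mul_zero, mul_zero,
      zero_add, zero_add, e3, a3 (k + 1) (by omega)]
    simp

theorem dK_form (n : ℤ) : ∃ p : K2 F,
    dK (K3 F) (gy F) (gt F) X (gd F) n = Polynomial.C p + Polynomial.C 1 * X := by
  refine ⟨2 * (X + (n : K2 F)) ^ 3 + 3 * (X + (n : K2 F)) ^ 2 + (X + (n : K2 F))
    + Polynomial.C (kt F) * (3 * (X + (n : K2 F)) ^ 2 + 3 * (X + (n : K2 F)) + 1)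
    + (Polynomial.C (kt F) ^ 2 - Polynomial.C (kd F)) * (2 * (X + (n : K2 F)) + 1), ?_⟩
  rw [dK]
  simp only [map_add, map_sub, map_mul, map_pow, map_ofNat, map_one, map_intCast]
  ring

theorem Sym_D : Sym F (opD F (K3 F) (gy F) (gt F) X (ga F) (gd F)) 1 0 0 (-1) := by
  intro d s k v ⟨a1, a2, a3⟩
  have e : ∀ n : ℤ, ∃ p q r r' : K2 F, ∀ m,
      (opD F (K3 F) (gy F) (gt F) X (ga F) (gd F) v n).coeff (m + 1) =
      q * (v (n - 1)).coeff (m + 1) - (p * (v n).coeff (m + 1) + 1 * (v n).coeff m)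
      - (r * (v (n + 1)).coeff (m + 1) + r' * (v (n + 1)).coeff m) := by
    intro n
    obtain ⟨p, hp⟩ := phi_form F (n + 1)
    obtain ⟨p', hp'⟩ := dK_form F n
    refine ⟨p', -(X + Polynomial.C (kt F) + (n : K2 F)), (X + (n : K2 F) + 1) * p,
      (X + (n : K2 F) + 1) * (2 * (X + ((n + 1 : ℤ) : K2 F))), fun m => ?_⟩
    have : (gy F + (n : K3 F) + 1) * (Polynomial.C p + Polynomial.C (2 * (X + ((n + 1 : ℤ) : K2 F))) * X)
      = Polynomial.C ((X + (n : K2 F) + 1) * p) + Polynomial.C ((X + (n : K2 F) + 1) * (2 * (X + ((n + 1 : ℤ) : K2 F)))) * X := by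
      simp only [map_add, map_mul, map_ofNat, map_one, map_intCast]
      ring
    have e0 : -(gy F + gt F + (n : K3 F)) =
        Polynomial.C (-(X + Polynomial.C (kt F) + (n : K2 F))) := by
      simp only [map_add, map_mul, map_neg, map_one, map_intCast]
    rw [opD_apply, hp, hp', this, coeff_sub, coeff_sub, coeff_lin F _ _ 0, coeff_lin F _ _ 0,
      e0, coeff_C_mul]
  simp only [add_comm 1 d, zero_add]
  refine ⟨⟨?_, ?_, ?_⟩, ?_⟩
  · intro n m hm
    obtain ⟨m, rfl⟩ : ∃ m', m = m' + 1 := ⟨m - 1, by omega⟩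
    obtain ⟨p, q, r, r', h⟩ := e n
    rw [h, a1 _ _ (by omega), a1 _ _ (by omega), a1 _ _ (by omega), a1 _ _ (by omega),
      a1 _ _ (by omega)]; simp
  · intro n hn
    obtain ⟨p, q, r, r', h⟩ := e n
    rw [h, a1 (n - 1) _ (by omega), a1 n (d + 1) (by omega), a1 (n + 1) (d + 1) (by omega),
      a2 n (by omega), a2 (n + 1) (by omega)]; simp
  · intro j hj
    obtain ⟨p, q, r, r', h⟩ := e s
    rw [h, a1 (s - 1) _ (by omega), a1 s (d + 1) (by omega), a1 (s + 1) (d + 1) (by omega),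
      a2 (s + 1) (by omega)]
    simp [a3 j hj]
  · obtain ⟨p, q, r, r', h⟩ := e s
    rw [h, a1 (s - 1) _ (by omega), a1 s (d + 1) (by omega), a1 (s + 1) (d + 1) (by omega),
      a2 (s + 1) (by omega)]
    simp

abbrev R : Racah F →ₐ[F] Module.End F (ℤ → K3 F) :=
  rho F (K3 F) (gy F) (gt F) X (ga F) (gd F)

def kyd : Fin 6 → ℕ := ![0, 1, 1, 1, 0, 0]
def kys : Fin 6 → ℤ := ![1, -1, 0, 0, 0, 0]
def kyk : Fin 6 → ℕ := ![0, 1, 0, 0, 0, 0]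
def kyc : Fin 6 → F := ![1, 2, -1, -2, 1, 2]
def kye : Fin 6 → (Fin 3 →₀ ℕ) :=
  ![0, 0, 0, Finsupp.single 0 1, Finsupp.single 1 1, Finsupp.single 2 1]

theorem Sym_gen (i : Fin 6) :
    Sym F (R F (gen_s4 F i)) (kyd i) (kys i) (kyk i) (MvPolynomial.monomial (kye i) (kyc F i)) := by
  have hX : ∀ (j : Fin 3) (c : F), MvPolynomial.monomial (Finsupp.single j 1) c
      = MvPolynomial.C c * MvPolynomial.X j := by
    intro j c; rw [MvPolynomial.X, MvPolynomial.C_mul_monomial, mul_one]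
  fin_cases i
  · show Sym F (R F (A F)) 0 1 0 (MvPolynomial.monomial 0 1)
    rw [rho_A]; exact Sym_A F
  · show Sym F (R F (B F)) 1 (-1) 1 (MvPolynomial.monomial 0 2)
    rw [rho_B]; exact (Sym_B F).congr F rfl rfl rfl (map_ofNat MvPolynomial.C 2).symm
  · show Sym F (R F (D F)) 1 0 0 (MvPolynomial.monomial 0 (-1))
    rw [rho_D]; exact (Sym_D F).congr F rfl rfl rfl (by simp [← MvPolynomial.C_apply])
  · show Sym F (R F (beta F)) 1 0 0 (MvPolynomial.monomial (Finsupp.single 0 1) (-2))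
    rw [rho_beta, hX]
    have : betaK (K3 F) (gt F) X (ga F) (gd F) =
      Polynomial.C (Polynomial.C (kt F ^ 4 - (2 * kd F + 1) * kt F ^ 2 - ka F)) + Polynomial.C (Polynomial.C (-2 * kt F)) * X := by
      rw [betaK]
      simp only [map_add, map_sub, map_mul, map_pow, map_ofNat, map_one, map_neg]
      ring
    rw [this]
    exact (Sym_S1 F _ _).congr F rfl rfl rfl (by simp [kt, show (MvPolynomial.C 2 : K1 F) = 2 from map_ofNat _ 2])
  · show Sym F (R F (alpha F)) 0 0 0 (MvPolynomial.monomial (Finsupp.single 1 1) 1)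
    rw [rho_alpha]; exact Sym_S F _
  · show Sym F (R F (delta F)) 0 0 0 (MvPolynomial.monomial (Finsupp.single 2 1) 2)
    rw [rho_delta, hX]
    have : 2 * gd F = Polynomial.C (Polynomial.C (2 * kd F)) := by simp only [map_mul, map_ofNat]
    rw [this]
    exact (Sym_S F _).congr F rfl rfl rfl (by simp [kd, show (MvPolynomial.C 2 : K1 F) = 2 from map_ofNat _ 2])

theorem Sym_word (l : List (Fin 6)) :
    Sym F (R F (word F l)) (l.map kyd).sum (l.map kys).sum (l.map kyk).sum
      (MvPolynomial.monomial (l.map kye).sum (l.map (kyc F)).prod) := by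
  induction l with
  | nil => simpa [word] using Sym.one F
  | cons x l ih =>
    rw [word_cons, map_mul]
    exact ((Sym_gen F x).mul F ih).congr F (by simp) (by simp) (by simp)
      (by simp [MvPolynomial.monomial_mul])

def md (m : Multiset (Fin 6)) : ℕ := (m.map kyd).sum
def ms (m : Multiset (Fin 6)) : ℤ := (m.map kys).sum
def mk (m : Multiset (Fin 6)) : ℕ := (m.map kyk).sum
def me (m : Multiset (Fin 6)) : Fin 3 →₀ ℕ := (m.map kye).sum
def mc (m : Multiset (Fin 6)) : F := (m.map (kyc F)).prod

theorem Sym_mon (m : Multiset (Fin 6)) :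
    Sym F (R F (mon F m)) (md m) (ms m) (mk m) (MvPolynomial.monomial (me m) (mc F m)) := by
  have h := Sym_word F m.toList
  have e : (m.toList : Multiset (Fin 6)) = m := m.coe_toList
  refine h.congr F ?_ ?_ ?_ ?_
  · conv_rhs => rw [← e]
    simp [md, -Multiset.coe_toList]
  · conv_rhs => rw [← e]
    simp [ms, -Multiset.coe_toList]
  · conv_rhs => rw [← e]
    simp [mk, -Multiset.coe_toList]
  · conv_rhs => rw [← e]
    simp [me, mc, -Multiset.coe_toList]

theorem mc_ne (hchar : (2 : F) ≠ 0) (m : Multiset (Fin 6)) : mc F m ≠ 0 := by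
  refine Multiset.prod_ne_zero ?_
  intro h
  obtain ⟨i, _, hi⟩ := Multiset.mem_map.1 h
  fin_cases i <;> simp [kyc, hchar] at hi

theorem m_count (m : Multiset (Fin 6)) : md m = m.count 1 + m.count 2 + m.count 3 ∧
    ms m = m.count 0 - m.count 1 ∧ mk m = m.count 1 ∧ me m 0 = m.count 3 ∧
    me m 1 = m.count 4 ∧ me m 2 = m.count 5 := by
  induction m using Multiset.induction_on with
  | empty => simp [md, ms, mk, me]
  | cons x m ih =>
    obtain ⟨h1, h2, h3, h4, h5, h6⟩ := ih
    have e1 : md (x ::ₘ m) = kyd x + md m := by simp [md]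
    have e2 : ms (x ::ₘ m) = kys x + ms m := by simp [ms]
    have e3 : mk (x ::ₘ m) = kyk x + mk m := by simp [mk]
    have e4 : ∀ i, me (x ::ₘ m) i = kye x i + me m i := by intro i; simp [me]
    rw [e1, e2, e3, e4, e4, e4, h1, h2, h3, h4, h5, h6]
    simp only [Multiset.count_cons]
    fin_cases x <;> simp [kyd, kys, kyk, kye] <;> omega

theorem m_inj {m m' : Multiset (Fin 6)} (h1 : md m = md m') (h2 : ms m = ms m')
    (h3 : mk m = mk m') (h4 : me m = me m') : m = m' := by
  obtain ⟨a1, a2, a3, a4, a5, a6⟩ := m_count m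
  obtain ⟨b1, b2, b3, b4, b5, b6⟩ := m_count m'
  rw [h4] at a4 a5 a6
  ext i
  fin_cases i <;> simp <;> omega

theorem exists_sym (hchar : (2 : F) ≠ 0) (u : Racah F) (hu : u ≠ 0) :
    ∃ d s k Q, Q ≠ 0 ∧ Sym F (R F u) d s k Q := by
  classical
  obtain ⟨c, rfl⟩ := (Finsupp.mem_span_range_iff_exists_finsupp).1 (span_mon F hchar u)
  have hc : c.support.Nonempty := by
    rw [Finsupp.support_nonempty_iff]; rintro rfl; exact hu (by simp)
  obtain ⟨m0, hm0, hmax⟩ := c.support.exists_max_image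
    (fun m => toLex (md m, toLex (ms m, mk m))) hc
  refine ⟨md m0, ms m0, mk m0, ∑ m ∈ c.support,
    if md m = md m0 ∧ ms m = ms m0 ∧ mk m = mk m0 then
      c m • MvPolynomial.monomial (me m) (mc F m) else 0, ?_, ?_⟩
  · intro h0
    have h1 := congrArg (MvPolynomial.coeff (me m0)) h0
    rw [MvPolynomial.coeff_sum, Finset.sum_eq_single m0] at h1
    · simp [mc_ne F hchar m0] at h1
      exact (Finsupp.mem_support_iff.1 hm0) h1
    · intro m _ hne
      split_ifs with h
      · rw [MvPolynomial.coeff_smul, MvPolynomial.coeff_monomial, if_neg, smul_zero]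
        intro h'
        exact hne (m_inj h.1 h.2.1 h.2.2 h')
      · simp
    · intro h; exact absurd hm0 h
  · rw [Finsupp.sum, map_sum]
    have gen_sum : ∀ (S : Finset (Multiset (Fin 6))), S ⊆ c.support →
        Sym F (∑ m ∈ S, R F (c m • mon F m)) (md m0) (ms m0) (mk m0)
        (∑ m ∈ S, if md m = md m0 ∧ ms m = ms m0 ∧ mk m = mk m0 then
          c m • MvPolynomial.monomial (me m) (mc F m) else 0) := by
      intro S
      induction S using Finset.induction_on with
      | empty => intro _; simpa using Sym.zero F _ _ _
      | insert m S hm ih =>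
        intro hS
        rw [Finset.sum_insert hm, Finset.sum_insert hm]
        refine Sym.add F ?_ (ih (fun x hx => hS (Finset.mem_insert_of_mem hx)))
        have hm' := hS (Finset.mem_insert_self m S)
        rw [map_smul]
        have hs := (Sym_mon F m).smul F (c m)
        split_ifs with h
        · exact hs.congr F h.1 h.2.1 h.2.2 rfl
        · have hle := hmax m hm'
          simp only [Prod.Lex.toLex_le_toLex] at hle
          refine hs.lower F ?_
          omega
    exact gen_sum _ (fun _ h => h)

theorem main_domain (hchar : (2 : F) ≠ 0) (u v : Racah F) (hu : u ≠ 0) (hv : v ≠ 0) :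
    u * v ≠ 0 := by
  obtain ⟨d, s, k, Q, hQ, h⟩ := exists_sym F hchar u hu
  obtain ⟨d', s', k', Q', hQ', h'⟩ := exists_sym F hchar v hv
  have hm := h.mul F h'
  intro h0
  rw [← map_mul, h0, map_zero] at hm
  have hG : G F 0 0 0 (Pi.single 0 1) := by
    refine ⟨?_, ?_, ?_⟩
    · intro n m hm
      by_cases hn : n = 0
      · subst hn; simp [coeff_one, hm.ne']
      · simp [hn]
    · intro n hn; simp [hn.ne']
    · intro j hj; simp [coeff_one, hj.ne']
  have := (hm 0 0 0 _ hG).2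
  simp [hQ, hQ'] at this

end symb

theorem statement4 (hchar : (2 : F) ≠ 0) :
    ∀ u v : Racah F, u * v = 0 → u = 0 ∨ v = 0 := by
  intro u v huv
  by_contra hne
  rw [not_or] at hne
  exact main_domain F hchar u v hne.1 hne.2 huv

end RacahPaper
end
end
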